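/- arXiv:2512.16894 — 3 statements merged into one kernel-verified Lean document; each statement's English description precedes it below -/
import Mathlib

section
/- Let k ≥ 1 be an integer and α ∈ (0, 1). For s = (s₀, …, s_{k−1}) ∈ ℝ^k with all s_j ≥ 0 and s₀ + ⋯ + s_{k−1} ≤ 1, write s_k := 1 − s₀ − ⋯ − s_{k−1}, and similarly for s' = (s'₀, …, s'_{k−2}) ∈ ℝ^{k−1} write s'_{k−1} := 1 − s'₀ − ⋯ − s'_{k−2}. Then for every measurable F : ℝ^{k+1} → [0, ∞], the following identity holds in [0, ∞]: Σ_{i=0}^{k} ∫_{{s : s_j ≥ 0, Σ_j s_j ≤ 1, s₀ ≥ s₁ ≥ ⋯ ≥ s_k}} (1 − s_i)^{−1} · (s₀·s₁⋯s_k)^{α−1} · F(s_i, s₀, …, s_{i−1}, s_{i+1}, …, s_k) ds₀ ⋯ ds_{k−1} = ∫₀¹ y^{α−1}·(1 − y)^{kα−2} · ( ∫_{{s' : s'_j ≥ 0, Σ_j s'_j ≤ 1, s'₀ ≥ ⋯ ≥ s'_{k−1}}} (s'₀⋯s'_{k−1})^{α−1} · F(y, (1 − y)·s'₀, …, (1 −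 y)·s'_{k−1}) ds'₀ ⋯ ds'_{k−2} ) dy. (For k = 1 the inner integral is just F(y, 1 − y).) -/
open MeasureTheory Set
open scoped ENNReal BigOperators

/-- Extend a point `s` of `ℝ^m` to the point `(s₀, …, s_{m−1}, 1 − s₀ − ⋯ − s_{m−1})`
of `ℝ^{m+1}`. -/
noncomputable def extendSimplex {m : ℕ} (s : Fin m → ℝ) : Fin (m + 1) → ℝ :=
  Fin.snoc s (1 - ∑ j, s j)

/-!
Lebesgue measure on the simplex is invariant under permutations of the coordinates, because they
act by affine maps of finite order, whose determinant is `±1`. Moving the `i`-th coordinate of a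
sorted vector to the front leaves a vector with sorted tail and, ties being negligible, almost every
vector with sorted tail arises this way for exactly one `i`. Hence the sum over `i` is a single
integral over the vectors with sorted tail. Splitting off their first coordinate `y` and rescaling
the others by `1 - y` produces the Jacobian `(1 - y) ^ n`, which combines with the density to give
the power of `1 - y` on the right-hand side.
-/

section Sorting

variable {n : ℕ} {β : Type*} [LinearOrder β]

lemma antitone_fin_cons {a : β} {t : Fin n → β} :
    Antitone (Fin.cons a t : Fin (n + 1) → β) ↔ (∀ j, t j ≤ a) ∧ Antitone t := by
  rw [antitone_iff_forall_lt, antitone_iff_forall_lt]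
  exact Fin.liftFun_cons (· ≥ ·)

lemma exists_antitone_insertNth {t : Fin n → β} (ht : Antitone t) (x : β) :
    ∃ i : Fin (n + 1), Antitone (i.insertNth x t : Fin (n + 1) → β) := by
  induction t using Fin.consInduction with
  | elim0 => exact ⟨0, fun j k _ => by rw [Subsingleton.elim (α := Fin 1) j k]⟩
  | @cons m a t ih =>
    obtain ⟨hta, ht⟩ := antitone_fin_cons.1 ht
    rcases le_total x a with hxa | hax
    · obtain ⟨i, hi⟩ := ih ht
      refine ⟨i.succ, ?_⟩
      rw [Fin.insertNth_succ_cons, antitone_fin_cons, Fin.forall_iff_succAbove i]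
      simpa using ⟨⟨hxa, hta⟩, hi⟩
    · refine ⟨0, ?_⟩
      rw [Fin.insertNth_zero', antitone_fin_cons, antitone_fin_cons, Fin.forall_fin_succ]
      simpa using ⟨⟨hax, fun j => (hta j).trans hax⟩, hta, ht⟩

lemma exists_antitone_comp_cycleRange_iff {z : Fin (n + 1) → β} :
    (∃ i : Fin (n + 1), Antitone (z ∘ i.cycleRange)) ↔ Antitone (Fin.tail z) := by
  constructor
  · rintro ⟨i, hi⟩
    have htail : Fin.tail z = (z ∘ i.cycleRange) ∘ i.succAbove := by
      ext j; simp [Fin.tail]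
    exact htail ▸ hi.comp_monotone (Fin.strictMono_succAbove i).monotone
  · intro ht
    obtain ⟨i, hi⟩ := exists_antitone_insertNth ht (z 0)
    exact ⟨i, by rwa [← Fin.cons_self_tail z, Fin.cons_comp_cycleRange]⟩

lemma eq_of_antitone_comp_cycleRange {z : Fin (n + 1) → β} (hz : Function.Injective z)
    {i j : Fin (n + 1)} (hi : Antitone (z ∘ i.cycleRange)) (hj : Antitone (z ∘ j.cycleRange)) :
    i = j := by
  have hcycle : i.cycleRange = j.cycleRange :=
    DFunLike.coe_injective (hz.comp_left (Tuple.unique_antitone hi hj))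
  rw [← Fin.cycleRange_symm_zero i, hcycle, Fin.cycleRange_symm_zero]

end Sorting

/-- Almost every vector with sorted tail arises from exactly one sorted vector by moving one
coordinate to the front. -/
lemma sum_setLIntegral_antitone_cycleRange {n : ℕ} {μ : Measure (Fin (n + 1) → ℝ)}
    (hμ : ∀ σ : Equiv.Perm (Fin (n + 1)), MeasurePreserving (fun z => z ∘ σ) μ μ)
    (hinj : ∀ᵐ z ∂μ, Function.Injective z)
    {G : (Fin (n + 1) → ℝ) → ℝ≥0∞} (hG : Measurable G) :
    ∑ i : Fin (n + 1), ∫⁻ z in {z | Antitone z}, G (z ∘ i.cycleRange.symm) ∂μ =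
      ∫⁻ z in {z | Antitone (Fin.tail z)}, G z ∂μ := by
  let A (i : Fin (n + 1)) : Set (Fin (n + 1) → ℝ) := {z | Antitone (z ∘ i.cycleRange)}
  have hA (i) : MeasurableSet (A i) := (hμ i.cycleRange).measurable isClosed_antitone.measurableSet
  have hdisj : Pairwise (Function.onFun (AEDisjoint μ) A) := fun i j hij =>
    measure_mono_null
      (fun _z hz hzinj => hij (eq_of_antitone_comp_cycleRange hzinj hz.1 hz.2)) (ae_iff.1 hinj)
  have hunion : ⋃ i, A i = {z | Antitone (Fin.tail z)} := by
    ext z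
    simpa only [A, mem_iUnion, mem_ofPred_eq] using exists_antitone_comp_cycleRange_iff
  have hmove (i : Fin (n + 1)) :
      ∫⁻ z in {z | Antitone z}, G (z ∘ i.cycleRange.symm) ∂μ = ∫⁻ z in A i, G z ∂μ := by
    have hpull := (hμ i.cycleRange).setLIntegral_comp_preimage isClosed_antitone.measurableSet
      (hG.comp (hμ i.cycleRange.symm).measurable)
    simpa [A, Function.comp_assoc] using hpull.symm
  simp_rw [hmove]
  rw [← hunion, lintegral_iUnion₀ (fun i => (hA i).nullMeasurableSet) hdisj, tsum_fintype]

section Haar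

variable {E : Type*} [NormedAddCommGroup E] [NormedSpace ℝ E] [FiniteDimensional ℝ E]
  [MeasurableSpace E] [BorelSpace E] (μ : Measure E) [μ.IsAddHaarMeasure]

lemma measurePreserving_of_isOfFinOrder {f : E →ᵃ[ℝ] E} (hf : IsOfFinOrder f) :
    MeasurePreserving f μ μ := by
  have hdet : |LinearMap.det f.linear| = 1 :=
    ((LinearMap.det.comp AffineMap.linearHom).isOfFinOrder hf).norm_eq_one
  have hlinear : MeasurePreserving f.linear μ μ := by
    refine ⟨f.linear.continuous_of_finiteDimensional.measurable, ?_⟩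
    rw [Measure.map_linearMap_addHaar_eq_smul_addHaar μ (abs_ne_zero.1 (hdet ▸ one_ne_zero)),
      abs_inv, hdet, inv_one, ENNReal.ofReal_one, one_smul]
  rw [f.decomp]
  exact (measurePreserving_add_right μ (f 0)).comp hlinear

lemma lintegral_eq_mul_lintegral_smul {r : ℝ} (hr : r ≠ 0) (g : E → ℝ≥0∞) :
    ∫⁻ x, g x ∂μ = ENNReal.ofReal |r ^ Module.finrank ℝ E| * ∫⁻ x, g (r • x) ∂μ := by
  rw [← (measurableEmbedding_const_smul₀ hr).lintegral_map, Measure.map_addHaar_smul μ hr,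
    lintegral_smul_measure, smul_eq_mul, ← mul_assoc, ← ENNReal.ofReal_mul (abs_nonneg _),
    ← abs_mul, mul_inv_cancel₀ (pow_ne_zero _ hr), abs_one, ENNReal.ofReal_one, one_mul]

end Haar

lemma lintegral_fin_cons {n : ℕ} {g : (Fin (n + 1) → ℝ) → ℝ≥0∞} (hg : Measurable g) :
    ∫⁻ s, g s = ∫⁻ y : ℝ, ∫⁻ t : Fin n → ℝ, g (Fin.cons y t) := by
  have hcons := (volume_preserving_piFinSuccAbove (fun _ : Fin (n + 1) => ℝ) 0).symm
  have hfubini := lintegral_prod (μ := volume) (ν := volume) _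
    (hg.comp hcons.measurable).aemeasurable
  rw [← hcons.lintegral_comp hg]
  simpa [Measure.volume_eq_prod, MeasurableEquiv.piFinSuccAbove, Fin.insertNthEquiv] using hfubini

section ExtendSimplex

variable {m : ℕ}

lemma extendSimplex_castSucc (s : Fin m → ℝ) (j : Fin m) :
    extendSimplex s j.castSucc = s j :=
  Fin.snoc_castSucc ..

lemma extendSimplex_last (s : Fin m → ℝ) : extendSimplex s (Fin.last m) = 1 - ∑ j, s j :=
  Fin.snoc_last ..

lemma sum_extendSimplex (s : Fin m → ℝ) : ∑ j, extendSimplex s j = 1 := by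
  simp [Fin.sum_univ_castSucc, extendSimplex_castSucc, extendSimplex_last]

lemma extendSimplex_init {z : Fin (m + 1) → ℝ} (hz : ∑ j, z j = 1) :
    extendSimplex (Fin.init z) = z := by
  have hlast : 1 - ∑ j, Fin.init z j = z (Fin.last m) := by
    rw [← hz, Fin.sum_univ_castSucc, Fin.init_def, add_sub_cancel_left]
  rw [extendSimplex, hlast, Fin.snoc_init_self]

lemma extendSimplex_init_comp_perm (σ : Equiv.Perm (Fin (m + 1))) (s : Fin m → ℝ) :
    extendSimplex (Fin.init (extendSimplex s ∘ σ)) = extendSimplex s ∘ σ :=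
  extendSimplex_init ((Equiv.sum_comp σ _).trans (sum_extendSimplex s))

lemma extendSimplex_mem_stdSimplex {s : Fin m → ℝ} :
    extendSimplex s ∈ stdSimplex ℝ (Fin (m + 1)) ↔ ∀ j, 0 ≤ extendSimplex s j :=
  and_iff_left (sum_extendSimplex s)

lemma extendSimplex_cons (y : ℝ) (s : Fin m → ℝ) :
    extendSimplex (Fin.cons y ((1 - y) • s) : Fin (m + 1) → ℝ) =
      Fin.cons y ((1 - y) • extendSimplex s) := by
  have hsum : ∑ j, (Fin.cons y ((1 - y) • extendSimplex s) : Fin (m + 2) → ℝ) j = 1 := by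
    rw [Fin.sum_cons]
    simp [← Finset.mul_sum, sum_extendSimplex]
  rw [← extendSimplex_init hsum]
  congr 1
  ext j
  cases j using Fin.cases with
  | zero => rfl
  | succ j => simp [Fin.init, extendSimplex_castSucc]

/-- `extendSimplex` as an affine map, through which finite-dimensional affine geometry applies. -/
noncomputable def extendSimplexAffine (m : ℕ) : (Fin m → ℝ) →ᵃ[ℝ] (Fin (m + 1) → ℝ) where
  toFun := extendSimplex
  linear := LinearMap.pi (Fin.lastCases (-∑ j, LinearMap.proj j) LinearMap.proj)
  map_vadd' s v := by
    ext j
    cases j using Fin.lastCases with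
    | last => simp [extendSimplex_last, Finset.sum_add_distrib]; ring
    | cast j => simp [extendSimplex_castSucc]

lemma measurable_extendSimplex : Measurable (extendSimplex (m := m)) :=
  (extendSimplexAffine m).continuous_of_finiteDimensional.measurable

lemma measurableEmbedding_extendSimplex : MeasurableEmbedding (extendSimplex (m := m)) :=
  (extendSimplexAffine m).continuous_of_finiteDimensional.measurableEmbedding
    (Function.LeftInverse.injective (g := fun z j => z j.castSucc) fun s =>
      funext (extendSimplex_castSucc s))

/-- The action of permutations on the hyperplane `∑ⱼ zⱼ = 1`, read in the first `m` coordinates.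
The inverse makes `σ` act by `z ↦ z ∘ σ⁻¹`, so that composition is preserved. -/
noncomputable def hyperplanePerm (m : ℕ) :
    Equiv.Perm (Fin (m + 1)) →* ((Fin m → ℝ) →ᵃ[ℝ] (Fin m → ℝ)) where
  toFun σ := (LinearMap.funLeft ℝ ℝ (⇑σ⁻¹ ∘ Fin.castSucc)).toAffineMap.comp (extendSimplexAffine m)
  map_one' := by
    ext s j
    exact extendSimplex_castSucc s j
  map_mul' σ τ := by
    ext s j
    exact (congrFun (extendSimplex_init_comp_perm τ⁻¹ s) (σ⁻¹ j.castSucc)).symm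

lemma extendSimplex_hyperplanePerm (σ : Equiv.Perm (Fin (m + 1))) (s : Fin m → ℝ) :
    extendSimplex (hyperplanePerm m σ s) = extendSimplex s ∘ ⇑σ⁻¹ :=
  extendSimplex_init_comp_perm σ⁻¹ s

lemma ae_extendSimplex_ne {a b : Fin (m + 1)} (hab : a ≠ b) :
    ∀ᵐ s : Fin m → ℝ, extendSimplex s a ≠ extendSimplex s b := by
  let ties : AffineSubspace ℝ (Fin m → ℝ) :=
    (LinearMap.eqLocus (LinearMap.proj (R := ℝ) (φ := fun _ => ℝ) a)
      (LinearMap.proj b)).toAffineSubspace.comap (extendSimplexAffine m)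
  have mem_ties (s) : s ∈ ties ↔ extendSimplex s a = extendSimplex s b := Iff.rfl
  have hvertex : Fin.init (Pi.single a 1 : Fin (m + 1) → ℝ) ∉ ties := by
    rw [mem_ties, extendSimplex_init (by simp)]
    simp [hab.symm]
  have hproper : ties ≠ ⊤ := fun h => hvertex (h ▸ AffineSubspace.mem_top ..)
  have hnull : ∀ᵐ s, s ∉ ties :=
    measure_eq_zero_iff_ae_notMem.1 (Measure.addHaar_affineSubspace volume ties hproper)
  simpa only [mem_ties] using hnull

end ExtendSimplex

section SimplexMeasure

variable {m n : ℕ}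

/-- Lebesgue measure on the hyperplane `∑ⱼ zⱼ = 1` of `ℝ^(m+1)`, normalized by its coordinates
`z₀, …, z_{m-1}`. -/
noncomputable def hyperplaneMeasure (m : ℕ) : Measure (Fin (m + 1) → ℝ) :=
  (volume : Measure (Fin m → ℝ)).map extendSimplex

/-- Lebesgue measure on the standard `m`-simplex, as a measure on `ℝ^(m+1)`, normalized as
`hyperplaneMeasure m`. -/
noncomputable def simplexMeasure (m : ℕ) : Measure (Fin (m + 1) → ℝ) :=
  (hyperplaneMeasure m).restrict (stdSimplex ℝ (Fin (m + 1)))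

lemma lintegral_hyperplaneMeasure (g : (Fin (m + 1) → ℝ) → ℝ≥0∞) :
    ∫⁻ z, g z ∂hyperplaneMeasure m = ∫⁻ s : Fin m → ℝ, g (extendSimplex s) :=
  measurableEmbedding_extendSimplex.lintegral_map g

lemma measurableSet_stdSimplex : MeasurableSet (stdSimplex ℝ (Fin (m + 1))) :=
  (isClosed_stdSimplex ℝ _).measurableSet

lemma setOf_nonneg_antitone_extendSimplex :
    {s : Fin m → ℝ | (∀ j, 0 ≤ extendSimplex s j) ∧ Antitone (extendSimplex s)} =
      extendSimplex ⁻¹' ({z | Antitone z} ∩ stdSimplex ℝ (Fin (m + 1))) := by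
  ext s
  exact (and_congr_left' extendSimplex_mem_stdSimplex.symm).trans and_comm

lemma measurableSet_nonneg_antitone_extendSimplex :
    MeasurableSet
      {s : Fin m → ℝ | (∀ j, 0 ≤ extendSimplex s j) ∧ Antitone (extendSimplex s)} := by
  rw [setOf_nonneg_antitone_extendSimplex]
  exact measurable_extendSimplex (isClosed_antitone.measurableSet.inter measurableSet_stdSimplex)

lemma setLIntegral_antitone_simplexMeasure (g : (Fin (m + 1) → ℝ) → ℝ≥0∞) :
    ∫⁻ z in {z | Antitone z}, g z ∂simplexMeasure m =
      ∫⁻ s in {s : Fin m → ℝ | (∀ j, 0 ≤ extendSimplex s j) ∧ Antitone (extendSimplex s)},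
        g (extendSimplex s) := by
  rw [simplexMeasure, Measure.restrict_restrict isClosed_antitone.measurableSet,
    setOf_nonneg_antitone_extendSimplex, hyperplaneMeasure,
    measurableEmbedding_extendSimplex.restrict_map,
    measurableEmbedding_extendSimplex.lintegral_map]

lemma measurePreserving_comp_perm_hyperplaneMeasure (σ : Equiv.Perm (Fin (m + 1))) :
    MeasurePreserving (fun z => z ∘ σ) (hyperplaneMeasure m) (hyperplaneMeasure m) := by
  refine (measurable_extendSimplex.measurePreserving volume).of_semiconj
    (measurePreserving_of_isOfFinOrder volume
      ((hyperplanePerm m).isOfFinOrder (isOfFinOrder_of_finite σ⁻¹))) (fun s => ?_) (by fun_prop)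
  rw [extendSimplex_hyperplanePerm, inv_inv]

lemma measurePreserving_comp_perm_simplexMeasure (σ : Equiv.Perm (Fin (m + 1))) :
    MeasurePreserving (fun z => z ∘ σ) (simplexMeasure m) (simplexMeasure m) := by
  have hpreimage : (fun z => z ∘ σ) ⁻¹' stdSimplex ℝ (Fin (m + 1)) =
      stdSimplex ℝ (Fin (m + 1)) := by
    ext z
    exact and_congr (σ.forall_congr_right (q := fun j => 0 ≤ z j)) (by simp [Equiv.sum_comp σ z])
  simpa only [simplexMeasure, hpreimage] using
    (measurePreserving_comp_perm_hyperplaneMeasure σ).restrict_preimage measurableSet_stdSimplex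

lemma ae_injective_simplexMeasure : ∀ᵐ z ∂simplexMeasure m, Function.Injective z := by
  refine ae_restrict_of_ae (measurableEmbedding_extendSimplex.ae_map_iff.2 ?_)
  have hne : ∀ᵐ s : Fin m → ℝ, ∀ a b, a ≠ b → extendSimplex s a ≠ extendSimplex s b := by
    simpa only [ae_all_iff] using fun a b hab => ae_extendSimplex_ne hab
  filter_upwards [hne] with s hs a b
  exact not_imp_not.1 (hs a b)

lemma lintegral_hyperplaneMeasure_succ {g : (Fin (n + 2) → ℝ) → ℝ≥0∞} (hg : Measurable g) :
    ∫⁻ z, g z ∂hyperplaneMeasure (n + 1) =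
      ∫⁻ y : ℝ, ENNReal.ofReal |(1 - y) ^ n| *
        ∫⁻ z, g (Fin.cons y ((1 - y) • z)) ∂hyperplaneMeasure n := by
  rw [lintegral_hyperplaneMeasure]
  refine (lintegral_fin_cons (hg.comp measurable_extendSimplex)).trans (lintegral_congr_ae ?_)
  filter_upwards [Measure.ae_ne volume 1] with y hy
  rw [lintegral_eq_mul_lintegral_smul volume (sub_ne_zero.2 hy.symm), Module.finrank_fin_fun,
    lintegral_hyperplaneMeasure]
  simp_rw [Function.comp_apply, extendSimplex_cons]

lemma cons_smul_mem_stdSimplex_iff {y : ℝ} (hy : y ∈ Ioo (0 : ℝ) 1) {z : Fin (n + 1) → ℝ} :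
    (Fin.cons y ((1 - y) • z) : Fin (n + 2) → ℝ) ∈ stdSimplex ℝ (Fin (n + 2)) ↔
      z ∈ stdSimplex ℝ (Fin (n + 1)) := by
  have hy' : 0 < 1 - y := sub_pos.2 hy.2
  have hsum : y + (1 - y) * ∑ j, z j = 1 ↔ ∑ j, z j = 1 := by
    rw [← eq_sub_iff_add_eq', mul_eq_left₀ hy'.ne']
  simp [stdSimplex, Fin.forall_fin_succ, Fin.sum_univ_succ (n := n + 1), ← Finset.mul_sum, hy.1.le,
    hy', hsum]

lemma lintegral_simplexMeasure_succ {g : (Fin (n + 2) → ℝ) → ℝ≥0∞} (hg : Measurable g) :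
    ∫⁻ z, g z ∂simplexMeasure (n + 1) =
      ∫⁻ y in Ioo (0 : ℝ) 1, ENNReal.ofReal ((1 - y) ^ n) *
        ∫⁻ z, g (Fin.cons y ((1 - y) • z)) ∂simplexMeasure n := by
  have hzero {y : ℝ} (hy : y ∉ Icc (0 : ℝ) 1) (z : Fin (n + 1) → ℝ) :
      (stdSimplex ℝ (Fin (n + 2))).indicator g (Fin.cons y ((1 - y) • z)) = 0 :=
    indicator_of_notMem (fun hz => hy (mem_Icc_of_mem_stdSimplex hz 0)) g
  have hscale {y : ℝ} (hy : y ∈ Ioo (0 : ℝ) 1) :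
      ∫⁻ z, (stdSimplex ℝ (Fin (n + 2))).indicator g (Fin.cons y ((1 - y) • z))
          ∂hyperplaneMeasure n =
        ∫⁻ z, g (Fin.cons y ((1 - y) • z)) ∂simplexMeasure n := by
    rw [simplexMeasure, ← lintegral_indicator measurableSet_stdSimplex]
    classical
    simp only [indicator_apply, cons_smul_mem_stdSimplex_iff hy]
  rw [simplexMeasure, ← lintegral_indicator measurableSet_stdSimplex,
    lintegral_hyperplaneMeasure_succ (hg.indicator measurableSet_stdSimplex),
    ← setLIntegral_eq_of_support_subset (s := Icc 0 1)
      (Function.support_subset_iff'.2 fun y hy => by simp [hzero hy]),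
    ← setLIntegral_congr Ioo_ae_eq_Icc]
  refine setLIntegral_congr_fun measurableSet_Ioo fun y hy => ?_
  simp only [hscale hy, abs_of_nonneg (pow_nonneg (sub_nonneg.2 hy.2.le) n)]

lemma setLIntegral_antitone_tail_simplexMeasure_succ {g : (Fin (n + 2) → ℝ) → ℝ≥0∞}
    (hg : Measurable g) :
    ∫⁻ z in {z | Antitone (Fin.tail z)}, g z ∂simplexMeasure (n + 1) =
      ∫⁻ y in Ioo (0 : ℝ) 1, ENNReal.ofReal ((1 - y) ^ n) *
        ∫⁻ z in {z | Antitone z}, g (Fin.cons y ((1 - y) • z)) ∂simplexMeasure n := by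
  have htail : MeasurableSet {z : Fin (n + 2) → ℝ | Antitone (Fin.tail z)} :=
    isClosed_antitone.measurableSet.preimage (by unfold Fin.tail; fun_prop)
  have hscale {y : ℝ} (hy : y ∈ Ioo (0 : ℝ) 1) (z : Fin (n + 1) → ℝ) :
      Antitone ((1 - y) • z) ↔ Antitone z := by
    have hy' : 0 < 1 - y := sub_pos.2 hy.2
    simp [Antitone, hy']
  rw [← lintegral_indicator htail, lintegral_simplexMeasure_succ (hg.indicator htail)]
  refine setLIntegral_congr_fun measurableSet_Ioo fun y hy => ?_
  simp only [← lintegral_indicator isClosed_antitone.measurableSet, indicator, mem_ofPred_eq,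
    Fin.tail_cons, hscale hy]

end SimplexMeasure

section BifurcatorDensity

variable {n : ℕ}

/-- The density of the Haas–Stephenson bifurcator with respect to Lebesgue measure on the simplex,
the mass singled out being the coordinate `z 0`. -/
noncomputable def bifurcatorDensity (α : ℝ) (z : Fin (n + 1) → ℝ) : ℝ :=
  (1 - z 0)⁻¹ * (∏ j, z j) ^ (α - 1)

lemma measurable_bifurcatorDensity (α : ℝ) : Measurable (bifurcatorDensity (n := n) α) := by
  unfold bifurcatorDensity
  fun_prop

lemma bifurcatorDensity_comp_cycleRange_symm (α : ℝ) (z : Fin (n + 1) → ℝ) (i : Fin (n + 1)) :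
    bifurcatorDensity α (z ∘ i.cycleRange.symm) = (1 - z i)⁻¹ * (∏ j, z j) ^ (α - 1) := by
  simp only [bifurcatorDensity, Function.comp_apply, Fin.cycleRange_symm_zero,
    Equiv.prod_comp i.cycleRange.symm z]

lemma pow_mul_bifurcatorDensity_cons (α : ℝ) {y : ℝ} (hy : y ∈ Ioo (0 : ℝ) 1)
    {z : Fin (n + 1) → ℝ} (hz : ∀ j, 0 ≤ z j) :
    (1 - y) ^ n * bifurcatorDensity α (Fin.cons y ((1 - y) • z) : Fin (n + 2) → ℝ) =
      y ^ (α - 1) * (1 - y) ^ ((n + 1) * α - 2) * (∏ j, z j) ^ (α - 1) := by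
  have hr : 0 < 1 - y := sub_pos.2 hy.2
  have hprod : ∏ j, (Fin.cons y ((1 - y) • z) : Fin (n + 2) → ℝ) j =
      y * ((1 - y) ^ (n + 1) * ∏ j, z j) := by
    rw [Fin.prod_cons]
    simp [Finset.prod_mul_distrib]
  have hexponent : (1 - y) ^ ((n + 1) * α - 2) =
      (1 - y) ^ n * (1 - y)⁻¹ * ((1 - y) ^ (n + 1)) ^ (α - 1) := by
    rw [← Real.rpow_natCast_mul hr.le, ← Real.rpow_neg_one, ← Real.rpow_natCast,
      ← Real.rpow_add hr, ← Real.rpow_add hr]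
    push_cast
    ring_nf
  rw [bifurcatorDensity, hprod, Fin.cons_zero, Real.mul_rpow hy.1.le
    (mul_nonneg (pow_nonneg hr.le _) (Finset.prod_nonneg fun j _ => hz j)),
    Real.mul_rpow (pow_nonneg hr.le _) (Finset.prod_nonneg fun j _ => hz j), hexponent]
  ring

end BifurcatorDensity

theorem haas_stephenson_change_of_variables_general
    (n : ℕ) (α : ℝ) (F : (Fin (n + 2) → ℝ) → ℝ≥0∞) (hF : Measurable F) :
    (∑ i : Fin (n + 2),
      ∫⁻ s in {s : Fin (n + 1) → ℝ |
          (∀ j, 0 ≤ extendSimplex s j) ∧ Antitone (extendSimplex s)},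
        ENNReal.ofReal ((1 - extendSimplex s i)⁻¹ * (∏ j, extendSimplex s j) ^ (α - 1)) *
          F (extendSimplex s ∘ ⇑(Fin.cycleRange i).symm))
    = ∫⁻ y in Ioo (0:ℝ) 1,
        ENNReal.ofReal (y ^ (α - 1) * (1 - y) ^ ((n + 1) * α - 2)) *
        ∫⁻ s' in {s' : Fin n → ℝ |
            (∀ j, 0 ≤ extendSimplex s' j) ∧ Antitone (extendSimplex s')},
          ENNReal.ofReal ((∏ j, extendSimplex s' j) ^ (α - 1)) *
            F (Fin.cons y fun j => (1 - y) * extendSimplex s' j) := by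
  let G (z : Fin (n + 2) → ℝ) : ℝ≥0∞ := ENNReal.ofReal (bifurcatorDensity α z) * F z
  have hG : Measurable G := (measurable_bifurcatorDensity α).ennreal_ofReal.mul hF
  have hbreak := (sum_setLIntegral_antitone_cycleRange measurePreserving_comp_perm_simplexMeasure
    ae_injective_simplexMeasure hG).trans (setLIntegral_antitone_tail_simplexMeasure_succ hG)
  simp only [setLIntegral_antitone_simplexMeasure, G, bifurcatorDensity_comp_cycleRange_symm]
    at hbreak
  refine hbreak.trans (setLIntegral_congr_fun measurableSet_Ioo fun y hy => ?_)
  have hy' : 0 ≤ 1 - y := sub_nonneg.2 hy.2.le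
  have hweight : 0 ≤ y ^ (α - 1) * (1 - y) ^ ((n + 1) * α - 2) :=
    mul_nonneg (Real.rpow_nonneg hy.1.le _) (Real.rpow_nonneg hy' _)
  simp only [← lintegral_const_mul' _ _ ENNReal.ofReal_ne_top]
  refine setLIntegral_congr_fun measurableSet_nonneg_antitone_extendSimplex fun s hs => ?_
  simp only [← mul_assoc, ← ENNReal.ofReal_mul (pow_nonneg hy' n), ← ENNReal.ofReal_mul hweight,
    pow_mul_bifurcatorDensity_cons α hy hs.1]
  rfl

/-- **Haas–Stephenson change-of-variables identity.**  Let `k = n + 1 ≥ 1` and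
`α ∈ (0,1)`.  For every measurable `F : ℝ^{k+1} → [0,∞]`,
the sum over `i = 0, …, k` of the integrals over the ordered `(k+1)`-simplex of
`(1 − s_i)⁻¹·(s₀⋯s_k)^{α−1}·F(s_i, s₀, …, ŝ_i, …, s_k)` equals
`∫₀¹ y^{α−1}(1−y)^{kα−2} ∫_{ordered k-simplex} (s'₀⋯s'_{k−1})^{α−1}
  F(y, (1−y)s'₀, …, (1−y)s'_{k−1}) ds' dy`. -/
theorem haas_stephenson_change_of_variables
    (k n : ℕ) (hk : 1 ≤ k) (hkn : k = n + 1)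
    (α : ℝ) (hα : α ∈ Ioo (0:ℝ) 1)
    (F : (Fin (n + 2) → ℝ) → ℝ≥0∞) (hF : Measurable F) :
    (∑ i : Fin (n + 2),
      ∫⁻ s in {s : Fin (n + 1) → ℝ |
          (∀ j, 0 ≤ extendSimplex s j) ∧ Antitone (extendSimplex s)},
        ENNReal.ofReal ((1 - extendSimplex s i)⁻¹ * (∏ j, extendSimplex s j) ^ (α - 1)) *
          F (extendSimplex s ∘ ⇑(Fin.cycleRange i).symm))
    = ∫⁻ y in Ioo (0:ℝ) 1,
        ENNReal.ofReal (y ^ (α - 1) * (1 - y) ^ ((k : ℝ) * α - 2)) *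
        ∫⁻ s' in {s' : Fin n → ℝ |
            (∀ j, 0 ≤ extendSimplex s' j) ∧ Antitone (extendSimplex s')},
          ENNReal.ofReal ((∏ j, extendSimplex s' j) ^ (α - 1)) *
            F (Fin.cons y fun j => (1 - y) * extendSimplex s' j) := by
  subst hkn
  exact_mod_cast haas_stephenson_change_of_variables_general n α F hF
end

section
/- Define w(s) := (s·(1 − s))^{5/2} · ∫_{1/2}^s (t·(1 − t))^{−5/2} dt for s ∈ (1/2, 1). Then: (i) w(s) = (2/3)·s·(1 − s)·(2s − 1)·(1 + 8s − 8s²) for all s ∈ (1/2, 1); (ii) the supremum M := sup_{s ∈ (1/2, 1)} w(s)/(1 − s) = sup_{s ∈ (1/2, 1)} (2/3)·s·(2s − 1)·(1 + 8s − 8s²) is finite, and α_c := 1/M is the unique root in the interval (1, 3/2) of the cubic equation 256 − 162·x − 42·x² + x³ = 0; in particular 1/2 < α_c < 3/2, so that the inequality α·w(s) ≤ 1 − s holds for all s ∈ (1/2, 1) when α = 1/2 but fails for some s ∈ (1/2, 1) when α = 3/2. -/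
open MeasureTheory Set intervalIntegral

/-- `w(s) = (s(1−s))^{5/2} · ∫_{1/2}^s (t(1−t))^{−5/2} dt`, the function controlling the
monotonicity criterion for the Brownian growth-fragmentation splitting measure
(density `(s(1−s))^{−5/2}` on `(1/2, 1)`). -/
noncomputable def wBro (s : ℝ) : ℝ :=
  (s * (1 - s)) ^ ((5:ℝ)/2) * ∫ t in (1/2:ℝ)..s, (t * (1 - t)) ^ (-(5:ℝ)/2)

/-!
Write `q = s(1 − s)` and `w_γ = q^γ · ∫_{1/2}^s (t(1−t))^{−γ} dt`. Since `(2s − 1)² = 1 − 4q`,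
differentiating `(2s − 1) q^{−p}` gives the recursion `p · w_{p+1} = q ((2s − 1) + (4p − 2) w_p)`.
At `p = 1/2` the last term vanishes, so two steps compute `w_{5/2}`, and `w_{5/2}(s)/(1 − s)` is a
quartic. It is smaller at both ends of `[1/2, 1]` than at `9/10`, so its maximum `M` is attained at
an interior critical point; eliminating that point from the critical equation leaves a cubic for
`M`, whose reciprocal polynomial is strictly decreasing on an interval containing `(1, 3/2)`. The
monotonicity criterion for `α > 0` amounts to `α ≤ 1/M`.
-/

/-- The function `w` of the monotonicity criterion for the binary conservative splitting measure of
density `(s(1−s))^{−γ}`; the exponent of the Brownian one is `γ = 5/2`. -/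
noncomputable def wBin (γ s : ℝ) : ℝ :=
  (s * (1 - s)) ^ γ * ∫ t in (1 / 2 : ℝ)..s, (t * (1 - t)) ^ (-γ)

lemma wBro_eq_wBin (s : ℝ) : wBro s = wBin (5 / 2) s := by
  rw [wBro, wBin, neg_div]

lemma mul_one_sub_pos {t : ℝ} (ht : t ∈ Ioo (0 : ℝ) 1) : 0 < t * (1 - t) :=
  mul_pos ht.1 (sub_pos.2 ht.2)

lemma uIcc_half_subset_Ioo {s : ℝ} (hs : s ∈ Ioo (0 : ℝ) 1) : uIcc (1 / 2) s ⊆ Ioo 0 1 :=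
  ordConnected_Ioo.uIcc_subset (by norm_num) hs

lemma intervalIntegrable_mul_one_sub_rpow (r : ℝ) {s : ℝ} (hs : s ∈ Ioo (0 : ℝ) 1) :
    IntervalIntegrable (fun t : ℝ => (t * (1 - t)) ^ r) volume (1 / 2) s :=
  ContinuousOn.intervalIntegrable <| ContinuousOn.rpow_const (by fun_prop) fun _ ht =>
    Or.inl (mul_one_sub_pos (uIcc_half_subset_Ioo hs ht)).ne'

lemma hasDerivAt_two_mul_sub_one_mul_rpow (p : ℝ) {t : ℝ} (ht : t ∈ Ioo (0 : ℝ) 1) :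
    HasDerivAt (fun t : ℝ => (2 * t - 1) * (t * (1 - t)) ^ (-p))
      (p * (t * (1 - t)) ^ (-(p + 1)) - (4 * p - 2) * (t * (1 - t)) ^ (-p)) t := by
  have hpos := mul_one_sub_pos ht
  have hlin : HasDerivAt (fun t : ℝ => 2 * t - 1) 2 t := by
    simpa using ((hasDerivAt_id t).const_mul 2).sub_const 1
  have hquad : HasDerivAt (fun t : ℝ => t * (1 - t)) (1 * (1 - t) + t * -1) t :=
    (hasDerivAt_id t).mul ((hasDerivAt_id t).const_sub 1)
  have hpow : (t * (1 - t)) ^ (-p) = (t * (1 - t)) ^ (-(p + 1)) * (t * (1 - t)) := by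
    rw [← Real.rpow_add_one hpos.ne']
    ring_nf
  refine (hlin.mul (hquad.rpow_const (p := -p) (Or.inl hpos.ne'))).congr_deriv ?_
  rw [← neg_add', hpow]
  ring

lemma integral_mul_one_sub_rpow_reduction (p : ℝ) {s : ℝ} (hs : s ∈ Ioo (0 : ℝ) 1) :
    p * ∫ t in (1 / 2 : ℝ)..s, (t * (1 - t)) ^ (-(p + 1)) =
      (2 * s - 1) * (s * (1 - s)) ^ (-p) +
        (4 * p - 2) * ∫ t in (1 / 2 : ℝ)..s, (t * (1 - t)) ^ (-p) := by
  have hint := fun r => intervalIntegrable_mul_one_sub_rpow r hs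
  have hftc := integral_eq_sub_of_hasDerivAt
    (fun t ht => hasDerivAt_two_mul_sub_one_mul_rpow p (uIcc_half_subset_Ioo hs ht))
    (((hint _).const_mul p).sub ((hint _).const_mul (4 * p - 2)))
  rw [integral_sub ((hint _).const_mul p) ((hint _).const_mul (4 * p - 2)),
    intervalIntegral.integral_const_mul, intervalIntegral.integral_const_mul] at hftc
  linear_combination hftc

lemma mul_wBin_add_one (p : ℝ) {s : ℝ} (hs : s ∈ Ioo (0 : ℝ) 1) :
    p * wBin (p + 1) s = s * (1 - s) * ((2 * s - 1) + (4 * p - 2) * wBin p s) := by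
  have hpos := mul_one_sub_pos hs
  have hcancel : (s * (1 - s)) ^ p * (s * (1 - s)) ^ (-p) = 1 := by
    rw [← Real.rpow_add hpos, add_neg_cancel, Real.rpow_zero]
  rw [wBin, wBin, Real.rpow_add_one hpos.ne']
  linear_combination
    (s * (1 - s)) ^ p * (s * (1 - s)) * integral_mul_one_sub_rpow_reduction p hs +
      s * (1 - s) * (2 * s - 1) * hcancel

lemma wBin_three_halves {s : ℝ} (hs : s ∈ Ioo (0 : ℝ) 1) :
    wBin (3 / 2) s = 2 * (s * (1 - s)) * (2 * s - 1) := by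
  have h := mul_wBin_add_one (1 / 2) hs
  rw [show (1 / 2 : ℝ) + 1 = 3 / 2 by norm_num] at h
  linear_combination 2 * h

/-- The polynomial to which `w(s)/(1 − s)` reduces in the Brownian case. -/
noncomputable def brownianProfile (s : ℝ) : ℝ :=
  (2 / 3) * s * (2 * s - 1) * (1 + 8 * s - 8 * s ^ 2)

lemma wBro_eq_one_sub_mul_brownianProfile {s : ℝ} (hs : s ∈ Ioo (0 : ℝ) 1) :
    wBro s = (1 - s) * brownianProfile s := by
  have h := mul_wBin_add_one (3 / 2) hs
  rw [show (3 / 2 : ℝ) + 1 = 5 / 2 by norm_num, wBin_three_halves hs] at h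
  rw [wBro_eq_wBin, brownianProfile]
  linear_combination (2 / 3) * h

lemma wBro_div_one_sub {s : ℝ} (hs : s ∈ Ioo (0 : ℝ) 1) :
    wBro s / (1 - s) = brownianProfile s := by
  rw [wBro_eq_one_sub_mul_brownianProfile hs, mul_div_cancel_left₀ _ (sub_pos.2 hs.2).ne']

lemma image_wBro_div_one_sub {S : Set ℝ} (hS : S ⊆ Ioo 0 1) :
    (fun s => wBro s / (1 - s)) '' S = brownianProfile '' S :=
  image_congr fun _ hs => wBro_div_one_sub (hS hs)

lemma hasDerivAt_brownianProfile (s : ℝ) :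
    HasDerivAt brownianProfile (-(2 / 3) * (64 * s ^ 3 - 72 * s ^ 2 + 12 * s + 1)) s := by
  have hexpand : brownianProfile =
      fun s => (2 / 3) * (-16 * s ^ 4 + 24 * s ^ 3 - 6 * s ^ 2 - s) := by
    funext s
    rw [brownianProfile]
    ring
  rw [hexpand]
  refine HasDerivAt.congr_deriv (((((hasDerivAt_pow 4 s).const_mul (-16)).add
    ((hasDerivAt_pow 3 s).const_mul 24)).sub ((hasDerivAt_pow 2 s).const_mul 6)).sub
    (hasDerivAt_id s) |>.const_mul (2 / 3)) ?_
  norm_num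
  ring

lemma exists_isMaxOn_brownianProfile :
    ∃ c ∈ Ioo ((1 : ℝ) / 2) 1, IsMaxOn brownianProfile (Icc (1 / 2) 1) c := by
  refine isCompact_Icc.exists_isMaxOn_mem_subset (z := 9 / 10)
    (fun s _ => (hasDerivAt_brownianProfile s).continuousAt.continuousWithinAt)
    (by constructor <;> norm_num) fun s hs => ?_
  rw [Icc_sdiff_Ioo_same (by norm_num)] at hs
  rcases hs with rfl | rfl <;> norm_num [brownianProfile]

lemma brownianProfile_lt_one (s : ℝ) : brownianProfile s < 1 := by
  have hsos : 1 - brownianProfile s =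
      1 / 6 * (8 * s ^ 2 - 6 * s - 1) ^ 2 + 2 / 3 * (s - 1) ^ 2 + 1 / 6 := by
    rw [brownianProfile]
    ring
  have hpos : 0 < 1 - brownianProfile s := by
    rw [hsos]
    positivity
  exact sub_pos.1 hpos

-- Modulo the critical cubic, the quartic profile reduces to an affine function of `v = 2c(2c - 1)`,
-- and `v` itself satisfies a cubic with integer coefficients.
lemma cubic_brownianProfile_of_critical {c : ℝ} (hc : 64 * c ^ 3 - 72 * c ^ 2 + 12 * c + 1 = 0) :
    256 * brownianProfile c ^ 3 - 162 * brownianProfile c ^ 2 - 42 * brownianProfile c + 1 = 0 := by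
  set v := 2 * c * (2 * c - 1) with hv
  have hvalue : brownianProfile c = (10 * v - 1) / 16 := by
    rw [brownianProfile, hv]
    linear_combination (1 / 16 - c / 6) * hc
  have hcubic : 64 * v ^ 3 - 84 * v ^ 2 - 12 * v + 3 = 0 := by
    rw [hv]
    linear_combination (64 * c ^ 3 - 24 * c ^ 2 - 12 * c + 3) * hc
  rw [hvalue]
  linear_combination (125 / 128) * hcubic

lemma exists_isGreatest_brownianProfile :
    ∃ M ∈ Ioo ((2 : ℝ) / 3) 1, IsGreatest (brownianProfile '' Ioo (1 / 2) 1) M ∧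
      256 * M ^ 3 - 162 * M ^ 2 - 42 * M + 1 = 0 := by
  obtain ⟨c, hc, hmax⟩ := exists_isMaxOn_brownianProfile
  have hcritical : 64 * c ^ 3 - 72 * c ^ 2 + 12 * c + 1 = 0 := by
    have hderiv := (hmax.isLocalMax (Icc_mem_nhds hc.1 hc.2)).hasDerivAt_eq_zero
      (hasDerivAt_brownianProfile c)
    linarith
  have hlower : 2 / 3 < brownianProfile c := by
    have h : (2 : ℝ) / 3 < brownianProfile (9 / 10) := by norm_num [brownianProfile]
    exact h.trans_le (hmax (by constructor <;> norm_num))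
  refine ⟨brownianProfile c, ⟨hlower, brownianProfile_lt_one c⟩,
    ⟨mem_image_of_mem _ hc, ?_⟩, cubic_brownianProfile_of_critical hcritical⟩
  exact forall_mem_image.2 fun s hs => hmax (Ioo_subset_Icc_self hs)

lemma strictAntiOn_critical_cubic :
    StrictAntiOn (fun x : ℝ => 256 - 162 * x - 42 * x ^ 2 + x ^ 3) (Icc 0 28) := by
  intro x hx y hy hxy
  have hxx : x * x ≤ 28 * x := mul_le_mul_of_nonneg_right hx.2 hx.1
  have hyy : y * y ≤ 28 * y := mul_le_mul_of_nonneg_right hy.2 hy.1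
  have hyx : y * x ≤ 28 * x := mul_le_mul_of_nonneg_right hy.2 hx.1
  have hslope : 0 < 162 + 42 * (x + y) - (x ^ 2 + x * y + y ^ 2) := by linarith
  linear_combination mul_pos (sub_pos.2 hxy) hslope

lemma forall_mul_le_one_iff_le_one_div {ι K : Type*} [Field K] [LinearOrder K]
    [IsStrictOrderedRing K] {f : ι → K} {S : Set ι} {M α : K}
    (hM : IsLUB (f '' S) M) (hM0 : 0 < M) (hα : 0 < α) :
    (∀ s ∈ S, α * f s ≤ 1) ↔ α ≤ 1 / M := by
  rw [le_one_div hα hM0, isLUB_le_iff hM, mem_upperBounds, forall_mem_image]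
  simp only [le_div_iff₀' hα]

lemma forall_mul_wBro_le_iff_le_one_div {M α : ℝ}
    (hM : IsLUB (brownianProfile '' Ioo (1 / 2) 1) M) (hM0 : 0 < M) (hα : 0 < α) :
    (∀ s ∈ Ioo ((1 : ℝ) / 2) 1, α * wBro s ≤ 1 - s) ↔ α ≤ 1 / M := by
  rw [← forall_mul_le_one_iff_le_one_div hM hM0 hα]
  refine forall₂_congr fun s hs => ?_
  have hs0 : s ∈ Ioo (0 : ℝ) 1 := Ioo_subset_Ioo_left (by norm_num) hs
  rw [← wBro_div_one_sub hs0, ← mul_div_assoc, div_le_one (sub_pos.2 hs.2)]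

/-- **Critical self-similarity parameter of the Brownian growth-fragmentation tree.**
(i) `w(s) = (2/3)·s(1−s)(2s−1)(1+8s−8s²)` on `(1/2, 1)`;
(ii) `M = sup_{(1/2,1)} w(s)/(1−s) = sup_{(1/2,1)} (2/3)s(2s−1)(1+8s−8s²)` is finite, and
`α_c = 1/M` is the unique root in `(1, 3/2)` of `256 − 162x − 42x² + x³ = 0`; in
particular `1/2 < α_c < 3/2`, so `α·w(s) ≤ 1 − s` holds on `(1/2,1)` for `α = 1/2` but
fails for `α = 3/2`. -/
theorem brownian_growth_fragmentation_critical_alpha :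
    (∀ s ∈ Ioo ((1:ℝ)/2) 1,
      wBro s = (2/3) * s * (1 - s) * (2*s - 1) * (1 + 8*s - 8*s^2)) ∧
    BddAbove ((fun s => wBro s / (1 - s)) '' Ioo ((1:ℝ)/2) 1) ∧
    (sSup ((fun s => wBro s / (1 - s)) '' Ioo ((1:ℝ)/2) 1)
      = sSup ((fun s => (2/3) * s * (2*s - 1) * (1 + 8*s - 8*s^2)) '' Ioo ((1:ℝ)/2) 1)) ∧
    (let M := sSup ((fun s => wBro s / (1 - s)) '' Ioo ((1:ℝ)/2) 1)
     let αc := 1 / M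
     αc ∈ Ioo (1:ℝ) (3/2) ∧
     256 - 162*αc - 42*αc^2 + αc^3 = 0 ∧
     (∀ x ∈ Ioo (1:ℝ) (3/2), 256 - 162*x - 42*x^2 + x^3 = 0 → x = αc) ∧
     ((1:ℝ)/2 < αc ∧ αc < 3/2) ∧
     (∀ s ∈ Ioo ((1:ℝ)/2) 1, (1/2) * wBro s ≤ 1 - s) ∧
     (∃ s ∈ Ioo ((1:ℝ)/2) 1, ¬ ((3/2) * wBro s ≤ 1 - s))) := by
  have hsub : Ioo ((1 : ℝ) / 2) 1 ⊆ Ioo 0 1 := Ioo_subset_Ioo_left (by norm_num)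
  obtain ⟨M, ⟨hM_lower, hM_lt_one⟩, hgreatest, hcubic⟩ := exists_isGreatest_brownianProfile
  have hM0 : 0 < M := by linarith
  have hαc : 1 / M ∈ Ioo (1 : ℝ) (3 / 2) :=
    ⟨(one_lt_div hM0).2 hM_lt_one, by rw [div_lt_iff₀ hM0]; linarith⟩
  have hroot : 256 - 162 * (1 / M) - 42 * (1 / M) ^ 2 + (1 / M) ^ 3 = 0 := by
    field_simp
    linarith
  have hcriterion {α : ℝ} := forall_mul_wBro_le_iff_le_one_div (α := α) hgreatest.isLUB hM0
  have hinterval : Ioo (1 : ℝ) (3 / 2) ⊆ Icc 0 28 :=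
    Ioo_subset_Icc_self.trans (Icc_subset_Icc (by norm_num) (by norm_num))
  rw [image_wBro_div_one_sub hsub, hgreatest.csSup_eq]
  refine ⟨fun s hs => ?_, hgreatest.bddAbove, hgreatest.csSup_eq.symm, hαc, hroot,
    fun x hx hx0 => ?_, ⟨by linarith [hαc.1], hαc.2⟩, ?_, ?_⟩
  · rw [wBro_eq_one_sub_mul_brownianProfile (hsub hs), brownianProfile]
    ring
  · exact strictAntiOn_critical_cubic.injOn (hinterval hx) (hinterval hαc) (hx0.trans hroot.symm)
  · exact (hcriterion (by norm_num)).2 (by linarith [hαc.1])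
  · simpa only [not_forall, exists_prop] using (hcriterion (by norm_num)).not.2 hαc.2.not_ge
end

section
/- (i) For every s ∈ (0, 1): ∫_{1/2}^s (t·(1 − t))^{−2} dt = (2s − 1)/(s·(1 − s)) + 2·log(s/(1 − s)). (ii) There exists s ∈ (1/2, 1) such that (s·(1 − s))²·( (2s − 1)/(s·(1 − s)) + 2·log(s/(1 − s)) ) > 1 − s; equivalently, s·(2s − 1) + 2·s²·(1 − s)·log(s/(1 − s)) > 1 for some s ∈ (1/2, 1). Consequently the monotonicity criterion α·I(s) ≤ (1 − s)·λ(s) fails for α = 1, λ(s) = (s(1 − s))^{−2}, I(s) = ∫_{1/2}^s λ(t) dt. -/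
open MeasureTheory Set intervalIntegral

/-!
Since `(2t − 1)² = 1 − 4t(1 − t)`, the function `(2t − 1)/(t(1 − t))` has derivative
`(t(1 − t))⁻² − 2(t(1 − t))⁻¹`, and `2 log(t/(1 − t))` makes up for the second term. After
multiplication by `(s(1 − s))²`, both sides of the criterion at `α = 1` are divisible by `1 − s`,
and since `1 − s(2s − 1) = (1 − s)(1 + 2s)` one more factor `1 − s` cancels: the criterion fails
at `s` exactly when `1 + 2s < 2s² log(s/(1 − s))`. This happens near `1`, where the logarithm blows
up; for `s ≥ 8/9` it is at least `log 8 > 2`, which suffices.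
-/

/-- The closed form of `I(s) = ∫_{1/2}^s λ(t) dt` on `(0, 1)` for the Aidekon–Da Silva splitting
density `λ(t) = (t(1 − t))⁻²`. Off `[0, 1]` it is still an antiderivative of `λ`, because `Real.log`
is `log |·|`. -/
noncomputable def splittingPrimitive (s : ℝ) : ℝ :=
  (2 * s - 1) / (s * (1 - s)) + 2 * Real.log (s / (1 - s))

lemma splittingPrimitive_one_half : splittingPrimitive (1 / 2) = 0 := by
  norm_num [splittingPrimitive]

lemma hasDerivAt_log_div_one_sub {t : ℝ} (h0 : t ≠ 0) (h1 : t ≠ 1) :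
    HasDerivAt (fun x : ℝ => Real.log (x / (1 - x))) (t * (1 - t))⁻¹ t := by
  have h1' : 1 - t ≠ 0 := sub_ne_zero.mpr h1.symm
  have hdiv := (hasDerivAt_id' t).fun_div ((hasDerivAt_id' t).const_sub 1) h1'
  refine (hdiv.log (div_ne_zero h0 h1')).congr_deriv ?_
  field_simp
  ring

lemma hasDerivAt_two_mul_sub_one_div {t : ℝ} (h0 : t ≠ 0) (h1 : t ≠ 1) :
    HasDerivAt (fun x : ℝ => (2 * x - 1) / (x * (1 - x)))
      (((t * (1 - t)) ^ 2)⁻¹ - 2 * (t * (1 - t))⁻¹) t := by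
  have h1' : 1 - t ≠ 0 := sub_ne_zero.mpr h1.symm
  have hnum : HasDerivAt (fun x : ℝ => 2 * x - 1) (2 * 1) t :=
    ((hasDerivAt_id' t).const_mul 2).sub_const 1
  have hden := (hasDerivAt_id' t).fun_mul ((hasDerivAt_id' t).const_sub 1)
  refine (hnum.fun_div hden (mul_ne_zero h0 h1')).congr_deriv ?_
  field_simp
  ring

lemma hasDerivAt_splittingPrimitive {t : ℝ} (h0 : t ≠ 0) (h1 : t ≠ 1) :
    HasDerivAt splittingPrimitive ((t * (1 - t)) ^ 2)⁻¹ t :=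
  ((hasDerivAt_two_mul_sub_one_div h0 h1).add
    ((hasDerivAt_log_div_one_sub h0 h1).const_mul 2)).congr_deriv (sub_add_cancel _ _)

theorem integral_inv_mul_one_sub_sq {a b : ℝ} (h0 : 0 ∉ uIcc a b) (h1 : 1 ∉ uIcc a b) :
    ∫ t in a..b, ((t * (1 - t)) ^ 2)⁻¹ = splittingPrimitive b - splittingPrimitive a := by
  have ne_zero {t} (ht : t ∈ uIcc a b) : t ≠ 0 := ne_of_mem_of_not_mem ht h0
  have ne_one {t} (ht : t ∈ uIcc a b) : t ≠ 1 := ne_of_mem_of_not_mem ht h1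
  refine integral_eq_sub_of_hasDerivAt
    (fun t ht => hasDerivAt_splittingPrimitive (ne_zero ht) (ne_one ht))
    (ContinuousOn.intervalIntegrable ?_)
  exact ContinuousOn.inv₀ (by fun_prop) fun t ht =>
    pow_ne_zero 2 (mul_ne_zero (ne_zero ht) (sub_ne_zero.mpr (ne_one ht).symm))

theorem integral_one_half_inv_mul_one_sub_sq {s : ℝ} (hs : s ∈ Ioo (0 : ℝ) 1) :
    ∫ t in (1 / 2 : ℝ)..s, ((t * (1 - t)) ^ 2)⁻¹ = splittingPrimitive s := by
  have hsub : uIcc (1 / 2) s ⊆ Ioo (0 : ℝ) 1 := ordConnected_Ioo.uIcc_subset (by norm_num) hs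
  rw [integral_inv_mul_one_sub_sq (fun h => (hsub h).1.false) (fun h => (hsub h).2.false),
    splittingPrimitive_one_half, sub_zero]

lemma sq_mul_splittingPrimitive {s : ℝ} (h0 : s ≠ 0) (h1 : s ≠ 1) :
    (s * (1 - s)) ^ 2 * splittingPrimitive s =
      (1 - s) * (s * (2 * s - 1) + 2 * s ^ 2 * (1 - s) * Real.log (s / (1 - s))) := by
  have h1' : 1 - s ≠ 0 := sub_ne_zero.mpr h1.symm
  unfold splittingPrimitive
  field_simp

lemma one_sub_lt_sq_mul_splittingPrimitive_iff {s : ℝ} (h0 : s ≠ 0) (h1 : s < 1) :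
    1 - s < (s * (1 - s)) ^ 2 * splittingPrimitive s ↔
      1 < s * (2 * s - 1) + 2 * s ^ 2 * (1 - s) * Real.log (s / (1 - s)) := by
  rw [sq_mul_splittingPrimitive h0 h1.ne, lt_mul_iff_one_lt_right (sub_pos.mpr h1)]

lemma one_lt_add_mul_log_div_one_sub_iff {s : ℝ} (h1 : s < 1) :
    1 < s * (2 * s - 1) + 2 * s ^ 2 * (1 - s) * Real.log (s / (1 - s)) ↔
      1 + 2 * s < 2 * s ^ 2 * Real.log (s / (1 - s)) := by
  have hfactor : s * (2 * s - 1) + 2 * s ^ 2 * (1 - s) * Real.log (s / (1 - s)) - 1 =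
      (1 - s) * (2 * s ^ 2 * Real.log (s / (1 - s)) - (1 + 2 * s)) := by ring
  rw [← sub_pos, hfactor, mul_pos_iff_of_pos_left (sub_pos.mpr h1), sub_pos]

lemma two_lt_log_div_one_sub {s : ℝ} (hs : s ∈ Ico (8 / 9 : ℝ) 1) :
    2 < Real.log (s / (1 - s)) := by
  have h8 : 2 ^ 3 ≤ s / (1 - s) := by
    rw [le_div_iff₀ (sub_pos.mpr hs.2)]
    linarith [hs.1]
  calc (2 : ℝ) < 3 * Real.log 2 := by linarith [Real.log_two_gt_d9]
    _ = Real.log (2 ^ 3) := by rw [Real.log_pow, Nat.cast_ofNat]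
    _ ≤ Real.log (s / (1 - s)) := Real.log_le_log (by norm_num) h8

lemma one_lt_add_mul_log_div_one_sub {s : ℝ} (hs : s ∈ Ico (8 / 9 : ℝ) 1) :
    1 < s * (2 * s - 1) + 2 * s ^ 2 * (1 - s) * Real.log (s / (1 - s)) := by
  have hs0 : 0 < s := by linarith [hs.1]
  rw [one_lt_add_mul_log_div_one_sub_iff hs.2]
  calc 1 + 2 * s < 2 * s ^ 2 * 2 := by nlinarith [hs.1]
    _ < 2 * s ^ 2 * Real.log (s / (1 - s)) := by
      gcongr
      exact two_lt_log_div_one_sub hs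

lemma one_sub_lt_sq_mul_splittingPrimitive {s : ℝ} (hs : s ∈ Ico (8 / 9 : ℝ) 1) :
    1 - s < (s * (1 - s)) ^ 2 * splittingPrimitive s :=
  (one_sub_lt_sq_mul_splittingPrimitive_iff (by linarith [hs.1]) hs.2).mpr
    (one_lt_add_mul_log_div_one_sub hs)

theorem one_sub_mul_inv_sq_lt_integral {s : ℝ} (hs : s ∈ Ico (8 / 9 : ℝ) 1) :
    (1 - s) * ((s * (1 - s)) ^ 2)⁻¹ < ∫ t in (1 / 2 : ℝ)..s, ((t * (1 - t)) ^ 2)⁻¹ := by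
  have h0 : 0 < s := by linarith [hs.1]
  have h1 : 0 < 1 - s := sub_pos.mpr hs.2
  rw [integral_one_half_inv_mul_one_sub_sq ⟨h0, hs.2⟩, mul_inv_lt_iff₀' (by positivity)]
  exact one_sub_lt_sq_mul_splittingPrimitive hs

/-- **The Aidekon–Da Silva tree is not growing.**
(i) For `s ∈ (0,1)`: `∫_{1/2}^s (t(1−t))^{−2} dt = (2s−1)/(s(1−s)) + 2·log(s/(1−s))`.
(ii) There is `s ∈ (1/2,1)` with
`(s(1−s))²·((2s−1)/(s(1−s)) + 2 log(s/(1−s))) > 1 − s`, equivalently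
`s(2s−1) + 2s²(1−s)·log(s/(1−s)) > 1`.  Consequently the monotonicity criterion
`α·I(s) ≤ (1−s)·λ(s)` fails for `α = 1`, `λ(s) = (s(1−s))^{−2}`,
`I(s) = ∫_{1/2}^s λ(t) dt`. -/
theorem aidekon_da_silva_not_growing :
    (∀ s ∈ Ioo (0:ℝ) 1,
      (∫ t in (1/2:ℝ)..s, ((t * (1 - t)) ^ 2)⁻¹)
        = (2*s - 1) / (s * (1 - s)) + 2 * Real.log (s / (1 - s))) ∧
    (∃ s ∈ Ioo ((1:ℝ)/2) 1,
      (s * (1 - s)) ^ 2 * ((2*s - 1) / (s * (1 - s)) + 2 * Real.log (s / (1 - s))) > 1 - s ∧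
      s * (2*s - 1) + 2 * s^2 * (1 - s) * Real.log (s / (1 - s)) > 1) ∧
    (∃ s ∈ Ioo ((1:ℝ)/2) 1,
      ¬ ((1:ℝ) * (∫ t in (1/2:ℝ)..s, ((t * (1 - t)) ^ 2)⁻¹)
          ≤ (1 - s) * ((s * (1 - s)) ^ 2)⁻¹)) := by
  have hs : (8 / 9 : ℝ) ∈ Ioo (1 / 2 : ℝ) 1 := by norm_num
  have hs' : (8 / 9 : ℝ) ∈ Ico (8 / 9 : ℝ) 1 := by norm_num
  refine ⟨fun s => integral_one_half_inv_mul_one_sub_sq,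
    ⟨8 / 9, hs, one_sub_lt_sq_mul_splittingPrimitive hs', one_lt_add_mul_log_div_one_sub hs'⟩,
    ⟨8 / 9, hs, ?_⟩⟩
  rw [one_mul, not_le]
  exact one_sub_mul_inv_sq_lt_integral hs'
end
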